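/- Let 1 ≤ d < r and let M be an indecomposable representation of Γ_r with dimension vector (1, r−d). Then there exists U ∈ Gr_{d,r} such that M is isomorphic to X_U. Consequently the map U ↦ [X_U] is a bijection from Gr_{d,r} onto the set of isomorphism classes of indecomposable representations of Γ_r with dimension vector (1, r−d). -/

import Mathlib

open Module LinearMap

universe u

/-- A finite-dimensional representation of the `r`-Kronecker quiver `Γ_r` over `k`:
two finite-dimensional `k`-vector spaces `M₁`, `M₂` and `r` linear maps `M₁ → M₂`. -/
structure KRep (k : Type u) [Field k] (r : ℕ) : Type (u + 1) where
  V1 : Type u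
  V2 : Type u
  [addV1 : AddCommGroup V1]
  [addV2 : AddCommGroup V2]
  [modV1 : Module k V1]
  [modV2 : Module k V2]
  [finV1 : FiniteDimensional k V1]
  [finV2 : FiniteDimensional k V2]
  f : Fin r → V1 →ₗ[k] V2

attribute [instance] KRep.addV1 KRep.addV2 KRep.modV1 KRep.modV2 KRep.finV1 KRep.finV2

variable {k : Type u} [Field k] {r : ℕ}

/-- For `α ∈ k^r`, the operator `x^M_α = ∑ i, αᵢ • M(γᵢ) : M₁ → M₂`. -/
def KRep.x (M : KRep k r) (α : Fin r → k) : M.V1 →ₗ[k] M.V2 :=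
  ∑ i, α i • M.f i

/-- The space `Hom(M, N)` of morphisms of representations, as a `k`-submodule of the
pairs of linear maps `(f₁ : M₁ → N₁, f₂ : M₂ → N₂)`; membership is the condition
`f₂ ∘ M(γᵢ) = N(γᵢ) ∘ f₁` for all `i`. -/
def KHom (M N : KRep k r) : Submodule k ((M.V1 →ₗ[k] N.V1) × (M.V2 →ₗ[k] N.V2)) where
  carrier := {p | ∀ i, p.2 ∘ₗ M.f i = N.f i ∘ₗ p.1}
  add_mem' := by
    intro a b ha hb i
    simp only [Prod.snd_add, Prod.fst_add, LinearMap.add_comp, LinearMap.comp_add, ha i, hb i]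
  zero_mem' := by intro i; simp
  smul_mem' := by
    intro c a ha i
    simp only [Prod.smul_snd, Prod.smul_fst, LinearMap.smul_comp, LinearMap.comp_smul, ha i]

/-- The representation `X_U` attached to a subspace `U ⊆ k^r`:
`(X_U)₁ = k`, `(X_U)₂ = k^r/U`, and `X_U(γᵢ)(c) = c · (eᵢ + U)`. -/
def XU (U : Submodule k (Fin r → k)) : KRep k r where
  V1 := k
  V2 := (Fin r → k) ⧸ U
  f := fun i => LinearMap.toSpanSingleton k _ (Submodule.Quotient.mk (Pi.single i 1))

/-- The `M₁`-part of the socle: `{m ∈ M₁ : x^M_u(m) = 0 for all u ∈ U}`. -/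
def KRep.socKer (M : KRep k r) (U : Submodule k (Fin r → k)) : Submodule k M.V1 :=
  ⨅ u ∈ U, LinearMap.ker (M.x u)

/-- `Soc_U(M) = {m ∈ M₁ : x^M_u(m) = 0 ∀ u ∈ U} ⊕ M₂`, as a subspace of `M₁ ⊕ M₂`. -/
def KRep.soc (M : KRep k r) (U : Submodule k (Fin r → k)) : Submodule k (M.V1 × M.V2) :=
  (M.socKer U).prod ⊤

/-- `Rad_U(M) = ∑_{u ∈ U} x^M_u(M₁) ⊆ M₂`. -/
def KRep.rad (M : KRep k r) (U : Submodule k (Fin r → k)) : Submodule k M.V2 :=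
  ⨆ u ∈ U, LinearMap.range (M.x u)

/-- Direct sum of two representations. -/
def KRep.sum (M N : KRep k r) : KRep k r where
  V1 := M.V1 × N.V1
  V2 := M.V2 × N.V2
  f := fun i => (M.f i).prodMap (N.f i)

/-- Isomorphism of representations. -/
def KIso (M N : KRep k r) : Prop :=
  ∃ (e1 : M.V1 ≃ₗ[k] N.V1) (e2 : M.V2 ≃ₗ[k] N.V2),
    ∀ i, (e2 : M.V2 →ₗ[k] N.V2) ∘ₗ M.f i = N.f i ∘ₗ (e1 : M.V1 →ₗ[k] N.V1)

/-- A representation is nonzero if its dimension vector is not `(0,0)`. -/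
def KRep.Nonzero (M : KRep k r) : Prop :=
  finrank k M.V1 ≠ 0 ∨ finrank k M.V2 ≠ 0

/-- A representation is indecomposable if it is nonzero and not isomorphic to a direct
sum of two nonzero representations. -/
def KRep.Indecomposable (M : KRep k r) : Prop :=
  M.Nonzero ∧ ∀ A B : KRep k r, A.Nonzero → B.Nonzero → ¬ KIso M (A.sum B)

/-- A representation is simple if its dimension vector is `(1,0)` or `(0,1)`. -/
def KRep.IsSimple (M : KRep k r) : Prop :=
  (finrank k M.V1 = 1 ∧ finrank k M.V2 = 0) ∨ (finrank k M.V1 = 0 ∧ finrank k M.V2 = 1)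

/-- `M` has constant `d`-socle rank: `dim_k Soc_U(M)` is independent of `U ∈ Gr_{d,r}`. -/
def KRep.ConstSocRank (d : ℕ) (M : KRep k r) : Prop :=
  ∃ c : ℕ, ∀ U : Submodule k (Fin r → k), finrank k U = d → finrank k (M.soc U) = c

/-- `M` has the equal `d`-socle property: `Soc_U(M)` is independent of `U ∈ Gr_{d,r}`. -/
def KRep.ESP (d : ℕ) (M : KRep k r) : Prop :=
  ∀ U V : Submodule k (Fin r → k), finrank k U = d → finrank k V = d → M.soc U = M.soc V

/-- `M` has constant `d`-radical rank: `dim_k Rad_U(M)` is independent of `U ∈ Gr_{d,r}`. -/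
def KRep.ConstRadRank (d : ℕ) (M : KRep k r) : Prop :=
  ∃ c : ℕ, ∀ U : Submodule k (Fin r → k), finrank k U = d → finrank k (M.rad U) = c

/-- `M` has the equal `d`-radical property: `Rad_U(M)` is independent of `U ∈ Gr_{d,r}`. -/
def KRep.ERP (d : ℕ) (M : KRep k r) : Prop :=
  ∀ U V : Submodule k (Fin r → k), finrank k U = d → finrank k V = d → M.rad U = M.rad V

/-!
A representation `M` with `dim M₁ = 1` is indecomposable exactly when the images of the structure
maps span `M₂`: a complement of their span would split off, and conversely each summand of `M` is
again spanned in this way, so both would need a nonzero share of the line `M₁`. If `m` spans `M₁`,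
the map `k^r → M₂`, `α ↦ x^M_α(m)`, is then surjective, and dividing by its kernel `U` identifies
`M` with `X_U`. An isomorphism only rescales `m`, so it does not change this kernel, and `U` can be
recovered from the isomorphism class.
-/

theorem KIso.symm {M N : KRep k r} (h : KIso M N) : KIso N M := by
  obtain ⟨e₁, e₂, he⟩ := h
  refine ⟨e₁.symm, e₂.symm, fun i => LinearMap.ext fun v => e₂.symm_apply_eq.mpr ?_⟩
  simpa using (LinearMap.congr_fun (he i) (e₁.symm v)).symm

namespace KRep

variable {M N A B : KRep k r}

/-- `M` is generated by `M₁` if the images of the maps `M(γᵢ)` span `M₂`, i.e. if no copy of the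
simple representation with dimension vector `(0, 1)` splits off. -/
def GeneratedByV1 (M : KRep k r) : Prop :=
  ⨆ i, range (M.f i) = ⊤

/-- The subrepresentation of `M` with underlying subspaces `W₁ ⊆ M₁` and `W₂ ⊆ M₂`. -/
def subrep (M : KRep k r) (W₁ : Submodule k M.V1) (W₂ : Submodule k M.V2)
    (h : ∀ i, ∀ v ∈ W₁, M.f i v ∈ W₂) : KRep k r where
  V1 := W₁
  V2 := W₂
  f i := (M.f i).restrict (h i)

theorem subrep_nonzero_iff {W₁ : Submodule k M.V1} {W₂ : Submodule k M.V2}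
    (h : ∀ i, ∀ v ∈ W₁, M.f i v ∈ W₂) : (M.subrep W₁ W₂ h).Nonzero ↔ W₁ ≠ ⊥ ∨ W₂ ≠ ⊥ :=
  or_congr Submodule.finrank_eq_zero.not Submodule.finrank_eq_zero.not

theorem kIso_sum_subrep_of_isCompl {W₁ W₁' : Submodule k M.V1} {W₂ W₂' : Submodule k M.V2}
    (h : ∀ i, ∀ v ∈ W₁, M.f i v ∈ W₂) (h' : ∀ i, ∀ v ∈ W₁', M.f i v ∈ W₂')
    (h₁ : IsCompl W₁ W₁') (h₂ : IsCompl W₂ W₂') :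
    KIso M ((M.subrep W₁ W₂ h).sum (M.subrep W₁' W₂' h')) := by
  let e₁ := Submodule.prodEquivOfIsCompl _ _ h₁
  let e₂ := Submodule.prodEquivOfIsCompl _ _ h₂
  have he (i : Fin r) (w : W₁ × W₁') :
      M.f i (e₁ w) = e₂ ((M.f i).restrict (h i) w.1, (M.f i).restrict (h' i) w.2) := by
    simp [e₁, e₂]
  exact .symm ⟨e₁, e₂, fun i => LinearMap.ext fun w => (he i w).symm⟩

theorem Indecomposable.eq_bot_or_eq_bot_of_isCompl (hM : M.Indecomposable)
    {W₁ W₁' : Submodule k M.V1} {W₂ W₂' : Submodule k M.V2}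
    (h : ∀ i, ∀ v ∈ W₁, M.f i v ∈ W₂) (h' : ∀ i, ∀ v ∈ W₁', M.f i v ∈ W₂')
    (h₁ : IsCompl W₁ W₁') (h₂ : IsCompl W₂ W₂') :
    (W₁ = ⊥ ∧ W₂ = ⊥) ∨ (W₁' = ⊥ ∧ W₂' = ⊥) := by
  by_contra! hne
  exact hM.2 _ _ ((subrep_nonzero_iff h).mpr (by tauto)) ((subrep_nonzero_iff h').mpr (by tauto))
    (kIso_sum_subrep_of_isCompl h h' h₁ h₂)

theorem Indecomposable.generatedByV1 [Nontrivial M.V1] (hM : M.Indecomposable) :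
    M.GeneratedByV1 := by
  obtain ⟨C, hC⟩ := Submodule.exists_isCompl (⨆ i, range (M.f i))
  have hmem (i : Fin r) (v : M.V1) : M.f i v ∈ ⨆ j, range (M.f j) :=
    Submodule.mem_iSup_of_mem i (mem_range_self _ v)
  rcases hM.eq_bot_or_eq_bot_of_isCompl (W₁ := ⊤) (W₁' := ⊥) (fun i v _ => hmem i v)
    (by simp) isCompl_top_bot hC with ⟨htop, -⟩ | ⟨-, rfl⟩
  · exact absurd htop top_ne_bot
  · exact eq_top_of_isCompl_bot hC

theorem GeneratedByV1.of_surjective (hM : M.GeneratedByV1) {φ₁ : M.V1 →ₗ[k] N.V1}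
    {φ₂ : M.V2 →ₗ[k] N.V2} (hφ : ∀ i, φ₂ ∘ₗ M.f i = N.f i ∘ₗ φ₁)
    (hsurj : Function.Surjective φ₂) : N.GeneratedByV1 := by
  refine eq_top_iff.mpr ?_
  calc
    ⊤ = (⨆ i, range (M.f i)).map φ₂ := by rw [hM, Submodule.map_top, range_eq_top.mpr hsurj]
    _ = ⨆ i, range (N.f i ∘ₗ φ₁) := by simp only [Submodule.map_iSup, ← range_comp, hφ]
    _ ≤ ⨆ i, range (N.f i) := iSup_mono fun i => range_comp_le_range _ _

theorem GeneratedByV1.of_kIso (hM : M.GeneratedByV1) (h : KIso M N) : N.GeneratedByV1 :=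
  let ⟨_, e₂, he⟩ := h
  hM.of_surjective he e₂.surjective

theorem GeneratedByV1.of_sum_left (h : (A.sum B).GeneratedByV1) : A.GeneratedByV1 :=
  h.of_surjective (φ₁ := fst k A.V1 B.V1) (φ₂ := fst k A.V2 B.V2) (fun _ => rfl)
    Prod.fst_surjective

theorem GeneratedByV1.of_sum_right (h : (A.sum B).GeneratedByV1) : B.GeneratedByV1 :=
  h.of_surjective (φ₁ := snd k A.V1 B.V1) (φ₂ := snd k A.V2 B.V2) (fun _ => rfl)
    Prod.snd_surjective

theorem GeneratedByV1.finrank_V1_pos (hM : M.GeneratedByV1) (h0 : M.Nonzero) :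
    0 < finrank k M.V1 := by
  refine Nat.pos_of_ne_zero fun hV1 => h0.elim (· hV1) (· ?_)
  have : Subsingleton M.V1 := finrank_zero_iff.mp hV1
  have hf (i : Fin r) : range (M.f i) = ⊥ := by rw [Subsingleton.elim (M.f i) 0, range_zero]
  rw [← finrank_top, ← hM]
  simp [hf]

theorem GeneratedByV1.indecomposable (hM : M.GeneratedByV1) (h1 : finrank k M.V1 = 1) :
    M.Indecomposable := by
  refine ⟨Or.inl (by simp [h1]), fun A B hA hB h => ?_⟩
  have hAB := hM.of_kIso h
  obtain ⟨e₁, -⟩ := h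
  have hsum : finrank k M.V1 = finrank k A.V1 + finrank k B.V1 :=
    e₁.finrank_eq.trans finrank_prod
  have := hAB.of_sum_left.finrank_V1_pos hA
  have := hAB.of_sum_right.finrank_V1_pos hB
  omega

/-- The linear map `k^r → M₂`, `α ↦ x^M_α(m)`, attached to a vector `m ∈ M₁`. -/
def evalAt (M : KRep k r) (m : M.V1) : (Fin r → k) →ₗ[k] M.V2 :=
  Fintype.linearCombination k fun i => M.f i m

@[simp]
theorem evalAt_single (m : M.V1) (i : Fin r) : M.evalAt m (Pi.single i 1) = M.f i m := by
  simp [evalAt]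

theorem range_evalAt {m : M.V1} (hm : k ∙ m = ⊤) : range (M.evalAt m) = ⨆ i, range (M.f i) := by
  have hf (i : Fin r) : range (M.f i) = k ∙ M.f i m := by
    rw [range_eq_map, ← hm, Submodule.map_span, Set.image_singleton]
  simp only [evalAt, Fintype.range_linearCombination, Submodule.span_range_eq_iSup, hf]

theorem comp_evalAt {φ₁ : M.V1 →ₗ[k] N.V1} {φ₂ : M.V2 →ₗ[k] N.V2}
    (hφ : ∀ i, φ₂ ∘ₗ M.f i = N.f i ∘ₗ φ₁) (m : M.V1) :
    φ₂ ∘ₗ M.evalAt m = N.evalAt (φ₁ m) := by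
  ext i
  simpa using LinearMap.congr_fun (hφ i) m

end KRep

section XU

variable {M : KRep k r} {U V : Submodule k (Fin r → k)}

theorem finrank_XU_V1 : finrank k (XU U).V1 = 1 :=
  finrank_self k

theorem finrank_XU_V2_add_finrank : finrank k (XU U).V2 + finrank k U = r :=
  U.finrank_quotient_add_finrank.trans (finrank_fin_fun k)

theorem evalAt_XU (c : k) : (XU U).evalAt c = c • U.mkQ := by
  refine pi_ext' fun i => LinearMap.ext_ring ?_
  exact KRep.evalAt_single (M := XU U) c i

theorem ker_evalAt_XU {c : (XU U).V1} (hc : c ≠ 0) : ker ((XU U).evalAt c) = U :=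
  (congrArg ker (evalAt_XU (k := k) c)).trans ((ker_smul U.mkQ c hc).trans U.ker_mkQ)

theorem XU_generatedByV1 : (XU U).GeneratedByV1 := by
  have heval : (XU U).evalAt (1 : k) = U.mkQ := (evalAt_XU 1).trans (one_smul k _)
  have hrange : range ((XU U).evalAt (1 : k)) = ⊤ := (congrArg range heval).trans U.range_mkQ
  exact (KRep.range_evalAt (M := XU U) Ideal.span_singleton_one).symm.trans hrange

theorem XU_indecomposable : (XU U).Indecomposable :=
  XU_generatedByV1.indecomposable finrank_XU_V1

theorem eq_of_kIso_XU (h : KIso (XU U) (XU V)) : U = V := by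
  obtain ⟨e₁, e₂, he⟩ := h
  have : Nontrivial (XU U).V1 := nontrivial_of_finrank_eq_succ finrank_XU_V1
  obtain ⟨c, hc⟩ := exists_ne (0 : (XU U).V1)
  calc
    U = ker ((XU U).evalAt c) := (ker_evalAt_XU hc).symm
    _ = ker ((XU V).evalAt (e₁ c)) :=
      (e₂.ker_comp _).symm.trans (congrArg ker (KRep.comp_evalAt he c))
    _ = V := ker_evalAt_XU (e₁.map_ne_zero_iff.mpr hc)

theorem kIso_XU_ker_evalAt {m : M.V1} (hm0 : m ≠ 0) (hm : k ∙ m = ⊤) (hM : M.GeneratedByV1) :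
    KIso M (XU (ker (M.evalAt m))) := by
  let e₁ : k ≃ₗ[k] M.V1 :=
    LinearEquiv.toSpanNonzeroSingleton k M.V1 m hm0 ≪≫ₗ LinearEquiv.ofTop _ hm
  let e₂ := (M.evalAt m).quotKerEquivOfSurjective
    (range_eq_top.mp ((KRep.range_evalAt hm).trans hM))
  have he (i : Fin r) (c : k) : M.f i (e₁ c) = e₂ (c • Submodule.Quotient.mk (Pi.single i 1)) := by
    simp [e₁, e₂]
  exact .symm ⟨e₁, e₂, fun i => LinearMap.ext fun c => (he i c).symm⟩

theorem KRep.Indecomposable.exists_kIso_XU (hM : M.Indecomposable) (h1 : finrank k M.V1 = 1) :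
    ∃ U, KIso M (XU U) := by
  have : Nontrivial M.V1 := nontrivial_of_finrank_eq_succ h1
  obtain ⟨m, hm0⟩ := exists_ne (0 : M.V1)
  have hm : k ∙ m = ⊤ := (finrank_eq_one_iff_of_nonzero m hm0).mp h1
  exact ⟨_, kIso_XU_ker_evalAt hm0 hm hM.generatedByV1⟩

end XU

/-- Let `1 ≤ d < r` and let `M` be an indecomposable representation of
`Γ_r` with dimension vector `(1, r−d)`. Then there is `U ∈ Gr_{d,r}` with `M ≅ X_U`.
Consequently `U ↦ [X_U]` is a bijection from `Gr_{d,r}` onto the set of isomorphism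
classes of indecomposable representations of `Γ_r` with dimension vector `(1, r−d)`:
it is injective up to isomorphism, and every `X_U` is indecomposable with dimension
vector `(1, r−d)`. -/
theorem indecomposable_dim_one_r_sub_d_iso_XU (d : ℕ) (hd : 1 ≤ d) (hdr : d < r)
    (M : KRep k r) (hind : M.Indecomposable)
    (h1 : finrank k M.V1 = 1) (h2 : finrank k M.V2 = r - d) :
    (∃ U : Submodule k (Fin r → k), finrank k U = d ∧ KIso M (XU U)) ∧
    (∀ U V : Submodule k (Fin r → k), finrank k U = d → finrank k V = d →
      KIso (XU U) (XU V) → U = V) ∧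
    (∀ U : Submodule k (Fin r → k), finrank k U = d →
      (XU U).Indecomposable ∧ finrank k (XU U).V1 = 1 ∧ finrank k (XU U).V2 = r - d) := by
  refine ⟨?_, fun U V _ _ => eq_of_kIso_XU, fun U hU => ⟨XU_indecomposable, finrank_XU_V1, ?_⟩⟩
  · obtain ⟨U, hMU⟩ := hind.exists_kIso_XU h1
    refine ⟨U, ?_, hMU⟩
    obtain ⟨-, e₂, -⟩ := hMU
    have hV2 : finrank k M.V2 = finrank k (XU U).V2 := e₂.finrank_eq
    have := finrank_XU_V2_add_finrank (U := U)
    omega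
  · have := finrank_XU_V2_add_finrank (U := U)
    omega
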